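/- Let Γ be a distance-regular graph with diameter 3, n vertices, and eigenvalues k > θ₁ > θ₂ > θ₃ with multiplicities 1, m₁, m₂, m₃. If n ≥ (m₁+1)(m₁+2)/2, then q²₁₁ = 0 or q³₁₁ = 0, and hence Γ is Q-polynomial with respect to θ₁. -/

import Mathlib

open Finset SimpleGraph

/-- `G` is a distance-regular graph with diameter `D` and intersection numbers
`b i`, `c i`, `a i` (so valency `k = b 0` and `a i = k - b i - c i`). -/
structure IsDRG {V : Type*} [Fintype V] (G : SimpleGraph V) (D : ℕ)
    (b c a : ℕ → ℕ) : Prop where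
  connected : G.Connected
  le_diam : ∀ x y : V, G.dist x y ≤ D
  exists_diam : ∃ x y : V, G.dist x y = D
  card_b : ∀ i, i ≤ D → ∀ x y : V, G.dist x y = i →
      Nat.card {z : V | G.Adj y z ∧ G.dist x z = i + 1} = b i
  card_c : ∀ i, i ≤ D → ∀ x y : V, G.dist x y = i →
      Nat.card {z : V | G.Adj y z ∧ G.dist x z = i - 1} = c i
  card_a : ∀ i, i ≤ D → ∀ x y : V, G.dist x y = i →
      Nat.card {z : V | G.Adj y z ∧ G.dist x z = i} = a i

/-- `θ` is an eigenvalue of the adjacency matrix of `G`. -/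
def IsEig {V : Type*} [Fintype V] [DecidableEq V] (G : SimpleGraph V)
    [DecidableRel G.Adj] (θ : ℝ) : Prop :=
  ∃ v : V → ℝ, v ≠ 0 ∧ (G.adjMatrix ℝ).mulVec v = θ • v

/-- `θ` is the second largest eigenvalue of `G` (`k` being the largest). -/
def IsSecondLargestEig {V : Type*} [Fintype V] [DecidableEq V] (G : SimpleGraph V)
    [DecidableRel G.Adj] (k θ : ℝ) : Prop :=
  IsEig G θ ∧ θ < k ∧ ∀ η : ℝ, IsEig G η → η ≠ k → η ≤ θ

/-- `θ` is the smallest eigenvalue of `G`. -/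
def IsSmallestEig {V : Type*} [Fintype V] [DecidableEq V] (G : SimpleGraph V)
    [DecidableRel G.Adj] (θ : ℝ) : Prop :=
  IsEig G θ ∧ ∀ η : ℝ, IsEig G η → θ ≤ η

/-- The multiplicity of `θ` as an eigenvalue of the adjacency matrix of `G`. -/
noncomputable def eigMult {V : Type*} [Fintype V] [DecidableEq V] (G : SimpleGraph V)
    [DecidableRel G.Adj] (θ : ℝ) : ℕ :=
  Module.finrank ℝ ↥(Module.End.eigenspace (Matrix.toLin' (G.adjMatrix ℝ)) θ)

/-- The standard sequence `u₀, u₁, u₂, u₃` associated to the eigenvalue `θ` of a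
distance-regular graph of diameter `3` with intersection numbers `b, c, a`. -/
noncomputable def stdSeq (b c a : ℕ → ℕ) (θ : ℝ) : ℕ → ℝ := fun l =>
  match l with
  | 0 => 1
  | 1 => θ / b 0
  | 2 => ((θ - a 1) * (θ / b 0) - c 1) / b 1
  | 3 => ((θ - a 2) * (((θ - a 1) * (θ / b 0) - c 1) / b 1) - c 2 * (θ / b 0)) / b 2
  | _ => 0

/-- The number `k_l` of vertices at distance `l` from a fixed vertex, for a
distance-regular graph of diameter `3`. -/
noncomputable def kdist (b c : ℕ → ℕ) : ℕ → ℝ := fun l =>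
  match l with
  | 0 => 1
  | 1 => b 0
  | 2 => b 0 * b 1 / c 2
  | 3 => b 0 * b 1 * b 2 / (c 2 * c 3)
  | _ => 0

/-- The Krein parameter `q^i_{11}` of a distance-regular graph of diameter `3` with `n`
vertices, where `m1` is the multiplicity of `θ1` and `θi` is the `i`-th eigenvalue:
`q^i_{11} = (m1 * m1 / n) * Σ_l k_l u_l(θ1)^2 u_l(θi)`. -/
noncomputable def krein11 (n m1 : ℕ) (b c a : ℕ → ℕ) (θ1 θi : ℝ) : ℝ :=
  ((m1 : ℝ) * m1 / n) *
    ∑ l ∈ Finset.range 4, kdist b c l * (stdSeq b c a θ1 l) ^ 2 * stdSeq b c a θi l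

/-- For a distance-regular graph of diameter `3` with eigenvalues
`k > θ1 > θ2 > θ3`, being `Q`-polynomial with respect to `θ1` is equivalent to
`q²₁₁ = 0` or `q³₁₁ = 0`. -/
def IsQPolyTheta1 (n m1 : ℕ) (b c a : ℕ → ℕ) (θ1 θ2 θ3 : ℝ) : Prop :=
  krein11 n m1 b c a θ1 θ2 = 0 ∨ krein11 n m1 b c a θ1 θ3 = 0

/-!
Let `U` be the matrix with entries `u_{d(x,y)}(θ)`, where `u(θ)` is the standard sequence of an
eigenvalue `θ` of multiplicity `m`. Its columns lie in the eigenspace of `θ`, so its entrywise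
square has rank at most `m + 1` choose `2`. This square acts on the eigenspace of `η` as a positive
multiple of the Krein parameter `q^η_{θθ}`, hence its range contains every eigenspace with nonzero
Krein parameter. If only the parameter of `θ` itself could vanish, all eigenspaces but that of `θ`
would lie in this range, forcing `n ≤ (m + 1 choose 2) + m < (m + 2 choose 2)`.
-/

open scoped Matrix

theorem finrank_mul_self_le {K A : Type*} [Field K] [CommRing A] [Algebra K A]
    (W : Submodule K A) [FiniteDimensional K W] :
    Module.finrank K ↥(W * W) ≤ (Module.finrank K W + 1).choose 2 := by
  let β := Module.finBasis K W
  let products : Sym2 (Fin (Module.finrank K W)) → A :=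
    Sym2.lift ⟨fun i j => (β i : A) * β j, fun i j => mul_comm _ _⟩
  have hW : Submodule.span K (Set.range fun i => (β i : A)) = W := by
    have h := congrArg (Submodule.map W.subtype) β.span_eq
    rwa [Submodule.map_span, ← Set.range_comp, Submodule.map_subtype_top] at h
  have hle : W * W ≤ Submodule.span K (Set.range products) := by
    nth_rewrite 1 2 [← hW]
    rw [Submodule.span_mul_span]
    refine Submodule.span_mono ?_
    rintro _ ⟨_, ⟨i, rfl⟩, _, ⟨j, rfl⟩, rfl⟩
    exact ⟨s(i, j), rfl⟩
  have := FiniteDimensional.span_of_finite K (Set.finite_range products)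
  calc Module.finrank K ↥(W * W)
      ≤ Module.finrank K (Submodule.span K (Set.range products)) := Submodule.finrank_mono hle
    _ ≤ Fintype.card (Sym2 (Fin (Module.finrank K W))) := finrank_range_le_card products
    _ = (Module.finrank K W + 1).choose 2 := by rw [Sym2.card, Fintype.card_fin]

theorem rank_hadamard_self_le {K m n : Type*} [Field K] [Fintype n] (A : Matrix m n K) :
    (A ⊙ A).rank ≤ (A.rank + 1).choose 2 := by
  simp only [Matrix.rank_eq_finrank_span_cols]
  set W := Submodule.span K (Set.range A.col)
  have hfg : W.FG := Submodule.fg_span (Set.finite_range _)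
  have := Module.Finite.iff_fg.2 hfg
  have := Module.Finite.iff_fg.2 (hfg.mul hfg)
  refine (Submodule.finrank_mono (Submodule.span_le.2 ?_)).trans (finrank_mul_self_le W)
  rintro _ ⟨j, rfl⟩
  have hj := Submodule.subset_span (R := K) (Set.mem_range_self (f := A.col) j)
  exact Submodule.mul_mem_mul hj hj

theorem iSup_eigenspace_toLin'_eq_top {𝕜 n : Type*} [RCLike 𝕜] [Fintype n] [DecidableEq n]
    {A : Matrix n n 𝕜} (hA : A.IsHermitian) :
    ⨆ η, Module.End.eigenspace (Matrix.toLin' A) η = ⊤ := by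
  let β := hA.eigenvectorBasis.toBasis.map (WithLp.linearEquiv 2 𝕜 (n → 𝕜))
  rw [eq_top_iff, ← β.span_eq, Submodule.span_le]
  rintro _ ⟨j, rfl⟩
  refine Submodule.mem_iSup_of_mem (hA.eigenvalues j : 𝕜) ?_
  rw [Module.End.mem_eigenspace_iff, Matrix.toLin'_apply]
  simpa [β] using hA.mulVec_eigenvectorBasis j

theorem exists_adj_dist_eq {V : Type*} {G : SimpleGraph V} (hG : G.Connected) {x y : V} {i : ℕ}
    (h : G.dist x y = i + 1) : ∃ z, G.Adj y z ∧ G.dist x z = i := by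
  obtain ⟨w, hw⟩ := hG.exists_walk_length_eq_dist y x
  rw [dist_comm, h] at hw
  cases w with
  | nil => simp at hw
  | @cons _ z _ hyz p =>
    have hle : G.dist x z ≤ p.length := dist_comm (G := G) ▸ dist_le p
    have hdiff := hyz.diff_dist_adj (u := x)
    rw [Walk.length_cons] at hw
    exact ⟨z, hyz, by omega⟩

/-- The operator on functions of the distance that `A * distMatrix G f` induces on `f`, i.e. the
action of the tridiagonal intersection matrix of a distance-regular graph with intersection
numbers `b, c, a`. At `i = 0` the junk value `f (0 - 1) = f 0` is harmless since `c 0 = 0`. -/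
def intersectionOp (b c a : ℕ → ℕ) (f : ℕ → ℝ) (i : ℕ) : ℝ :=
  b i * f (i + 1) + a i * f i + c i * f (i - 1)

/-- The standard sequence of `θ` for arbitrary diameter, extending `stdSeq`: the solution of
`intersectionOp b c a u = θ • u` with `u 0 = 1`. Only the terms up to the diameter are
meaningful. -/
noncomputable def cosineSeq (b c a : ℕ → ℕ) (θ : ℝ) : ℕ → ℝ
  | 0 => 1
  | 1 => θ / b 0
  | i + 2 =>
    ((θ - a (i + 1)) * cosineSeq b c a θ (i + 1) - c (i + 1) * cosineSeq b c a θ i) / b (i + 1)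

/-- The number of vertices at distance `l` from a vertex of a distance-regular graph of arbitrary
diameter, extending `kdist`. -/
noncomputable def distValency (b c : ℕ → ℕ) (l : ℕ) : ℝ :=
  ∏ i ∈ range l, (b i : ℝ) / c (i + 1)

/-- The Krein parameter `q^η_{θθ}` of a distance-regular graph of diameter `D`, without its
positive factor `m_θ ^ 2 / n`. -/
noncomputable def kreinSum (D : ℕ) (b c a : ℕ → ℕ) (θ η : ℝ) : ℝ :=
  ∑ l ∈ range (D + 1), distValency b c l * cosineSeq b c a θ l ^ 2 * cosineSeq b c a η l

/-- The element of the Bose–Mesner algebra whose `(x, y)` entry is `f (G.dist x y)`. -/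
noncomputable def distMatrix {V : Type*} (G : SimpleGraph V) (f : ℕ → ℝ) : Matrix V V ℝ :=
  Matrix.of fun x y => f (G.dist x y)

/-- The mean of `v` over the sphere of radius `l` around `x` in a distance-regular graph with
intersection numbers `b, c`. -/
noncomputable def sphereMean {V : Type*} [Fintype V] (G : SimpleGraph V) (b c : ℕ → ℕ)
    (v : V → ℝ) (x : V) (l : ℕ) : ℝ :=
  (∑ y with G.dist x y = l, v y) / distValency b c l

namespace IsDRG

variable {V : Type*} [Fintype V] {G : SimpleGraph V} {D : ℕ} {b c a : ℕ → ℕ}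

theorem exists_dist_eq (hG : IsDRG G D b c a) {i : ℕ} (hi : i ≤ D) :
    ∃ x y : V, G.dist x y = i := by
  induction hi using Nat.decreasingInduction with
  | self => exact hG.exists_diam
  | of_succ i _ ih =>
    obtain ⟨x, y, h⟩ := ih
    obtain ⟨z, -, hz⟩ := exists_adj_dist_eq hG.connected h
    exact ⟨x, z, hz⟩

theorem b_pos (hG : IsDRG G D b c a) {i : ℕ} (hi : i < D) : 0 < b i := by
  obtain ⟨x, y, hxy⟩ := hG.exists_dist_eq hi
  obtain ⟨z, hyz, hxz⟩ := exists_adj_dist_eq hG.connected hxy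
  rw [← hG.card_b i hi.le x z hxz]
  have : Nonempty {w : V | G.Adj z w ∧ G.dist x w = i + 1} := ⟨⟨y, hyz.symm, hxy⟩⟩
  exact Nat.card_pos

theorem c_succ_pos (hG : IsDRG G D b c a) {i : ℕ} (hi : i < D) : 0 < c (i + 1) := by
  obtain ⟨x, y, hxy⟩ := hG.exists_dist_eq hi
  obtain ⟨z, hyz, hxz⟩ := exists_adj_dist_eq hG.connected hxy
  rw [← hG.card_c (i + 1) hi x y hxy]
  have : Nonempty {w : V | G.Adj y w ∧ G.dist x w = i + 1 - 1} := ⟨⟨z, hyz, hxz⟩⟩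
  exact Nat.card_pos

theorem b_diam (hG : IsDRG G D b c a) : b D = 0 := by
  obtain ⟨x, y, hxy⟩ := hG.exists_diam
  rw [← hG.card_b D le_rfl x y hxy, Nat.card_eq_zero]
  exact .inl ⟨fun z => absurd (hG.le_diam x z) (by simp [z.2.2])⟩

theorem c_zero (hG : IsDRG G D b c a) : c 0 = 0 := by
  obtain ⟨x⟩ := hG.connected.nonempty
  rw [← hG.card_c 0 D.zero_le x x dist_self, Nat.card_eq_zero]
  exact .inl ⟨fun z => z.2.1.ne (hG.connected.dist_eq_zero_iff.1 z.2.2)⟩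

theorem a_zero (hG : IsDRG G D b c a) : a 0 = 0 := by
  obtain ⟨x⟩ := hG.connected.nonempty
  rw [← hG.card_a 0 D.zero_le x x dist_self, Nat.card_eq_zero]
  exact .inl ⟨fun z => z.2.1.ne (hG.connected.dist_eq_zero_iff.1 z.2.2)⟩

theorem c_one (hG : IsDRG G D b c a) (hD : 0 < D) : c 1 = 1 := by
  obtain ⟨x, y, hxy⟩ := hG.exists_dist_eq hD
  rw [← hG.card_c 1 hD x y hxy, Nat.card_eq_one_iff_unique]
  have eq_x : ∀ z : {z : V | G.Adj y z ∧ G.dist x z = 1 - 1}, x = z := fun z =>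
    hG.connected.dist_eq_zero_iff.1 z.2.2
  exact ⟨⟨fun u v => Subtype.ext ((eq_x u).symm.trans (eq_x v))⟩,
    ⟨x, (dist_eq_one_iff_adj.1 hxy).symm, dist_self⟩⟩

theorem distValency_pos (hG : IsDRG G D b c a) {l : ℕ} (hl : l ≤ D) :
    0 < distValency b c l :=
  prod_pos fun i hi =>
    have hiD : i < D := (mem_range.1 hi).trans_le hl
    div_pos (Nat.cast_pos.2 (hG.b_pos hiD)) (Nat.cast_pos.2 (hG.c_succ_pos hiD))

theorem distValency_succ_mul (hG : IsDRG G D b c a) {l : ℕ} (hl : l < D) :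
    distValency b c (l + 1) * c (l + 1) = distValency b c l * b l := by
  have hc : (c (l + 1) : ℝ) ≠ 0 := Nat.cast_ne_zero.2 (hG.c_succ_pos hl).ne'
  rw [distValency, prod_range_succ, mul_assoc, div_mul_cancel₀ _ hc, distValency]

theorem sum_distValency_mul_intersectionOp (hG : IsDRG G D b c a) (f g : ℕ → ℝ) :
    ∑ l ∈ range (D + 1), distValency b c l * intersectionOp b c a f l * g l =
      ∑ l ∈ range (D + 1), distValency b c l * f l * intersectionOp b c a g l := by
  -- The `b`-part of one side is the `c`-part of the other, shifted by one.
  have shift : ∀ f g : ℕ → ℝ,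
      ∑ l ∈ range (D + 1), distValency b c l * b l * f (l + 1) * g l =
        ∑ l ∈ range (D + 1), distValency b c l * c l * f l * g (l - 1) := by
    intro f g
    rw [sum_range_succ, sum_range_succ', hG.b_diam, hG.c_zero]
    simp only [Nat.cast_zero, mul_zero, zero_mul, add_zero, Nat.add_sub_cancel]
    exact sum_congr rfl fun l hl => by rw [hG.distValency_succ_mul (mem_range.1 hl)]
  have hfg := shift f g
  have hgf := shift g f
  simp only [intersectionOp, mul_add, add_mul, sum_add_distrib]
  simp only [mul_assoc, mul_left_comm, mul_comm] at hfg hgf ⊢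
  linarith

theorem intersectionOp_cosineSeq_of_lt (hG : IsDRG G D b c a) (θ : ℝ) {l : ℕ} (hl : l < D) :
    intersectionOp b c a (cosineSeq b c a θ) l = θ * cosineSeq b c a θ l := by
  have hb : (b l : ℝ) ≠ 0 := Nat.cast_ne_zero.2 (hG.b_pos hl).ne'
  cases l with
  | zero => simp [intersectionOp, cosineSeq, hG.a_zero, hG.c_zero, mul_div_cancel₀ _ hb]
  | succ l =>
    simp only [intersectionOp, cosineSeq, Nat.add_sub_cancel]
    field_simp
    ring

theorem eq_mul_cosineSeq (hG : IsDRG G D b c a) {θ : ℝ} {w : ℕ → ℝ}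
    (hw : ∀ l < D, intersectionOp b c a w l = θ * w l) {l : ℕ} (hl : l ≤ D) :
    w l = w 0 * cosineSeq b c a θ l := by
  induction l using Nat.strong_induction_on with
  | _ l ih =>
  cases l with
  | zero => simp [cosineSeq]
  | succ l =>
    have hb : (b l : ℝ) ≠ 0 := Nat.cast_ne_zero.2 (hG.b_pos hl).ne'
    have hu := hG.intersectionOp_cosineSeq_of_lt θ hl
    have hwl := hw l hl
    rw [intersectionOp, ih l (by omega) (by omega), ih (l - 1) (by omega) (by omega)] at hwl
    rw [intersectionOp] at hu
    refine mul_left_cancel₀ hb ?_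
    linear_combination hwl - w 0 * hu

theorem distMatrix_mulVec_apply (hG : IsDRG G D b c a) (f : ℕ → ℝ) (v : V → ℝ) (x : V) :
    (distMatrix G f *ᵥ v) x =
      ∑ l ∈ range (D + 1), distValency b c l * f l * sphereMean G b c v x l := by
  have hmaps : ∀ y ∈ (univ : Finset V), G.dist x y ∈ range (D + 1) := fun y _ =>
    mem_range.2 (Nat.lt_succ_of_le (hG.le_diam x y))
  rw [Matrix.mulVec, dotProduct, ← sum_fiberwise_of_maps_to hmaps]
  refine sum_congr rfl fun l hl => ?_
  have hk := (hG.distValency_pos (Nat.le_of_lt_succ (mem_range.1 hl))).ne'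
  calc ∑ y with G.dist x y = l, distMatrix G f x y * v y
      = f l * ∑ y with G.dist x y = l, v y := by
        rw [mul_sum]
        exact sum_congr rfl fun y hy => by rw [distMatrix, Matrix.of_apply, (mem_filter.1 hy).2]
    _ = distValency b c l * f l * sphereMean G b c v x l := by
        rw [sphereMean]
        field_simp

theorem sphereMean_zero (hG : IsDRG G D b c a) (v : V → ℝ) (x : V) :
    sphereMean G b c v x 0 = v x := by
  classical
  simp [sphereMean, distValency, hG.connected.dist_eq_zero_iff, filter_eq]

section AdjMatrix

variable [DecidableRel G.Adj]

theorem sum_neighborFinset_dist (hG : IsDRG G D b c a) (f : ℕ → ℝ) (x y : V) :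
    ∑ z ∈ G.neighborFinset y, f (G.dist x z) = intersectionOp b c a f (G.dist x y) := by
  have hfiber : ∀ j : ℕ, ∑ z ∈ G.neighborFinset y with G.dist x z = j, f (G.dist x z) =
      Nat.card {z : V | G.Adj y z ∧ G.dist x z = j} * f j := by
    intro j
    rw [sum_congr rfl fun z hz => congrArg f (mem_filter.1 hz).2, sum_const, nsmul_eq_mul,
      Nat.card_coe_set_eq, ← Set.ncard_coe_finset]
    simp
  have hle := hG.le_diam x y
  have hb := hG.card_b _ hle x y rfl
  have hc := hG.card_c _ hle x y rfl
  have ha := hG.card_a _ hle x y rfl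
  have hmaps : ∀ z ∈ G.neighborFinset y, G.dist x z ∈ Icc (G.dist x y - 1) (G.dist x y + 1) := by
    intro z hz
    have := ((G.mem_neighborFinset y z).1 hz).diff_dist_adj (u := x)
    rw [mem_Icc]
    omega
  rw [← sum_fiberwise_of_maps_to hmaps]
  simp only [hfiber, intersectionOp]
  generalize G.dist x y = i at *
  cases i with
  | zero =>
    rw [sum_Icc_succ_top (by omega), Icc_self, sum_singleton, ha, hb, hG.c_zero]
    ring
  | succ i =>
    rw [Nat.add_sub_cancel] at hc ⊢
    rw [sum_Icc_succ_top (by omega), sum_Icc_succ_top (by omega), Icc_self, sum_singleton,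
      ha, hb, hc]
    ring

theorem adjMatrix_mul_distMatrix (hG : IsDRG G D b c a) (f : ℕ → ℝ) :
    G.adjMatrix ℝ * distMatrix G f = distMatrix G (intersectionOp b c a f) := by
  ext y x
  rw [adjMatrix_mul_apply, distMatrix, distMatrix, Matrix.of_apply, G.dist_comm,
    ← hG.sum_neighborFinset_dist]
  simp only [Matrix.of_apply, G.dist_comm]

theorem distMatrix_intersectionOp_mulVec (hG : IsDRG G D b c a) (f : ℕ → ℝ) {θ : ℝ} {v : V → ℝ}
    (hv : G.adjMatrix ℝ *ᵥ v = θ • v) :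
    distMatrix G (intersectionOp b c a f) *ᵥ v = θ • distMatrix G f *ᵥ v := by
  have symm : ∀ g, (distMatrix G g)ᵀ = distMatrix G g := fun g => by
    ext x y
    simp [distMatrix, dist_comm]
  rw [← symm, ← hG.adjMatrix_mul_distMatrix, Matrix.transpose_mul, symm, transpose_adjMatrix,
    ← Matrix.mulVec_mulVec, hv, Matrix.mulVec_smul]

theorem intersectionOp_sphereMean (hG : IsDRG G D b c a) {θ : ℝ} {v : V → ℝ}
    (hv : G.adjMatrix ℝ *ᵥ v = θ • v) (x : V) {l : ℕ} (hl : l ≤ D) :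
    intersectionOp b c a (sphereMean G b c v x) l = θ * sphereMean G b c v x l := by
  have hmem : l ∈ range (D + 1) := mem_range.2 (Nat.lt_succ_of_le hl)
  have h := congrFun (hG.distMatrix_intersectionOp_mulVec (Pi.single l 1) hv) x
  rw [Pi.smul_apply, hG.distMatrix_mulVec_apply, hG.distMatrix_mulVec_apply,
    hG.sum_distValency_mul_intersectionOp] at h
  simp only [Pi.single_apply, mul_ite, mul_one, mul_zero, ite_mul, zero_mul, sum_ite_eq', hmem,
    if_true, smul_eq_mul] at h
  refine mul_left_cancel₀ (hG.distValency_pos hl).ne' ?_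
  linear_combination h

theorem sphereMean_eq (hG : IsDRG G D b c a) {θ : ℝ} {v : V → ℝ}
    (hv : G.adjMatrix ℝ *ᵥ v = θ • v) (x : V) {l : ℕ} (hl : l ≤ D) :
    sphereMean G b c v x l = v x * cosineSeq b c a θ l := by
  rw [hG.eq_mul_cosineSeq (fun _ hi => hG.intersectionOp_sphereMean hv x hi.le) hl,
    hG.sphereMean_zero]

theorem distMatrix_mulVec (hG : IsDRG G D b c a) (f : ℕ → ℝ) {θ : ℝ} {v : V → ℝ}
    (hv : G.adjMatrix ℝ *ᵥ v = θ • v) :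
    distMatrix G f *ᵥ v =
      (∑ l ∈ range (D + 1), distValency b c l * f l * cosineSeq b c a θ l) • v := by
  ext x
  rw [hG.distMatrix_mulVec_apply, Pi.smul_apply, smul_eq_mul, sum_mul]
  refine sum_congr rfl fun l hl => ?_
  rw [hG.sphereMean_eq hv x (Nat.le_of_lt_succ (mem_range.1 hl))]
  ring

end AdjMatrix

theorem kreinSum_valency_pos (hG : IsDRG G D b c a) (θ : ℝ) :
    0 < kreinSum D b c a θ (b 0) := by
  classical
  obtain ⟨x⟩ := hG.connected.nonempty
  have hone : G.adjMatrix ℝ *ᵥ (fun _ => 1) = (b 0 : ℝ) • fun _ => (1 : ℝ) := by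
    ext y
    rw [adjMatrix_mulVec_apply, hG.sum_neighborFinset_dist (fun _ => 1) y y, dist_self]
    simp [intersectionOp, hG.a_zero, hG.c_zero]
  have hrow : ∑ y, cosineSeq b c a θ (G.dist x y) ^ 2 = kreinSum D b c a θ (b 0) := by
    simpa [Matrix.mulVec, dotProduct, distMatrix, kreinSum] using
      congrFun (hG.distMatrix_mulVec (fun l => cosineSeq b c a θ l ^ 2) hone) x
  rw [← hrow]
  refine sum_pos' (fun y _ => sq_nonneg _) ⟨x, mem_univ x, ?_⟩
  simp [cosineSeq]

variable [DecidableRel G.Adj] [DecidableEq V]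

theorem intersectionOp_cosineSeq (hG : IsDRG G D b c a) {θ : ℝ} (hθ : IsEig G θ) {l : ℕ}
    (hl : l ≤ D) :
    intersectionOp b c a (cosineSeq b c a θ) l = θ * cosineSeq b c a θ l := by
  obtain hlt | rfl := hl.lt_or_eq
  · exact hG.intersectionOp_cosineSeq_of_lt θ hlt
  obtain ⟨v, hv0, hv⟩ := hθ
  obtain ⟨x, hx⟩ := Function.ne_iff.1 hv0
  have hmean := hG.intersectionOp_sphereMean hv x le_rfl
  rw [intersectionOp, hG.b_diam, hG.sphereMean_eq hv x le_rfl,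
    hG.sphereMean_eq hv x (Nat.sub_le l 1)] at hmean
  rw [intersectionOp, hG.b_diam]
  refine mul_left_cancel₀ hx ?_
  linear_combination hmean

theorem distMatrix_cosineSeq_col_mem_eigenspace (hG : IsDRG G D b c a) {θ : ℝ} (hθ : IsEig G θ)
    (x : V) :
    (distMatrix G (cosineSeq b c a θ)).col x ∈
      Module.End.eigenspace (Matrix.toLin' (G.adjMatrix ℝ)) θ := by
  rw [Module.End.mem_eigenspace_iff, Matrix.toLin'_apply]
  ext y
  have h := congrFun₂ (hG.adjMatrix_mul_distMatrix (cosineSeq b c a θ)) y x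
  exact h.trans (hG.intersectionOp_cosineSeq hθ (hG.le_diam y x))

theorem rank_distMatrix_cosineSeq_le (hG : IsDRG G D b c a) {θ : ℝ} (hθ : IsEig G θ) :
    (distMatrix G (cosineSeq b c a θ)).rank ≤ eigMult G θ := by
  rw [Matrix.rank_eq_finrank_span_cols]
  refine Submodule.finrank_mono (Submodule.span_le.2 ?_)
  rintro _ ⟨x, rfl⟩
  exact hG.distMatrix_cosineSeq_col_mem_eigenspace hθ x

/-- The absolute bound: as distinct eigenspaces are independent, the left-hand side is the sum of
the multiplicities of the eigenvalues `η` with `q^η_{θθ} ≠ 0`. -/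
theorem absolute_bound (hG : IsDRG G D b c a) {θ : ℝ} (hθ : IsEig G θ) :
    Module.finrank ℝ ↥(⨆ η : {η : ℝ // kreinSum D b c a θ η ≠ 0},
      Module.End.eigenspace (Matrix.toLin' (G.adjMatrix ℝ)) η) ≤ (eigMult G θ + 1).choose 2 := by
  let U := distMatrix G (cosineSeq b c a θ)
  have hUU : U ⊙ U = distMatrix G fun l => cosineSeq b c a θ l ^ 2 := by
    ext x y
    simp [U, distMatrix, sq]
  have hrange : ∀ η : {η : ℝ // kreinSum D b c a θ η ≠ 0},
      Module.End.eigenspace (Matrix.toLin' (G.adjMatrix ℝ)) η ≤ (U ⊙ U).mulVecLin.range := by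
    refine fun ⟨η, hη⟩ v hv => ⟨(kreinSum D b c a θ η)⁻¹ • v, ?_⟩
    rw [Module.End.mem_eigenspace_iff, Matrix.toLin'_apply] at hv
    rw [map_smul, Matrix.mulVecLin_apply, hUU, hG.distMatrix_mulVec _ hv]
    exact inv_smul_smul₀ hη v
  calc _ ≤ (U ⊙ U).rank := Submodule.finrank_mono (iSup_le hrange)
    _ ≤ (U.rank + 1).choose 2 := rank_hadamard_self_le U
    _ ≤ (eigMult G θ + 1).choose 2 :=
        Nat.choose_le_choose 2 (Nat.succ_le_succ (hG.rank_distMatrix_cosineSeq_le hθ))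

theorem card_le_of_kreinSum_ne_zero (hG : IsDRG G D b c a) {θ : ℝ} (hθ : IsEig G θ)
    (hkrein : ∀ η, IsEig G η → η ≠ b 0 → η ≠ θ → kreinSum D b c a θ η ≠ 0) :
    Fintype.card V ≤ (eigMult G θ + 1).choose 2 + eigMult G θ := by
  let E := Module.End.eigenspace (Matrix.toLin' (G.adjMatrix ℝ))
  let nonvanishing := {η : ℝ // kreinSum D b c a θ η ≠ 0}
  have htop : ⊤ ≤ (⨆ η : nonvanishing, E η) ⊔ E θ := by
    rw [← iSup_eigenspace_toLin'_eq_top (G.isHermitian_adjMatrix ℝ)]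
    refine iSup_le fun η v hv => ?_
    obtain rfl | hηθ := eq_or_ne η θ
    · exact Submodule.mem_sup_right hv
    obtain rfl | hv0 := eq_or_ne v 0
    · exact zero_mem _
    have hη : kreinSum D b c a θ η ≠ 0 := by
      obtain rfl | hηb := eq_or_ne η (b 0)
      · exact (hG.kreinSum_valency_pos θ).ne'
      · exact hkrein η ⟨v, hv0, by simpa using hv⟩ hηb hηθ
    exact Submodule.mem_sup_left (le_iSup (fun η : nonvanishing => E η) ⟨η, hη⟩ hv)
  have hcard := Submodule.finrank_mono htop
  rw [finrank_top, Module.finrank_fintype_fun_eq_card] at hcard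
  exact hcard.trans ((Submodule.finrank_add_le_finrank_add_finrank _ _).trans
    (Nat.add_le_add_right (hG.absolute_bound hθ) _))

end IsDRG

theorem cosineSeq_eq_stdSeq (b c a : ℕ → ℕ) (θ : ℝ) {l : ℕ} (hl : l < 4) :
    cosineSeq b c a θ l = stdSeq b c a θ l := by
  interval_cases l <;> simp [cosineSeq, stdSeq]

theorem distValency_eq_kdist (b : ℕ → ℕ) {c : ℕ → ℕ} (hc : c 1 = 1) {l : ℕ} (hl : l < 4) :
    distValency b c l = kdist b c l := by
  interval_cases l <;> simp [distValency, kdist, prod_range_succ, hc]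

theorem krein11_eq_mul_kreinSum (n m : ℕ) (b a : ℕ → ℕ) {c : ℕ → ℕ} (hc : c 1 = 1) (θ η : ℝ) :
    krein11 n m b c a θ η = m * m / n * kreinSum 3 b c a θ η := by
  refine congrArg _ (sum_congr rfl fun l hl => ?_)
  have hl : l < 4 := mem_range.1 hl
  rw [distValency_eq_kdist b hc hl, cosineSeq_eq_stdSeq b c a θ hl, cosineSeq_eq_stdSeq b c a η hl]

theorem stmt13_general {V : Type*} [Fintype V] [DecidableEq V] {G : SimpleGraph V}
    [DecidableRel G.Adj] {D : ℕ} {b c a : ℕ → ℕ} (hG : IsDRG G D b c a) {θ : ℝ} (hθ : IsEig G θ)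
    (hbound : (eigMult G θ + 1) * (eigMult G θ + 2) ≤ 2 * Fintype.card V) :
    ∃ η, IsEig G η ∧ η ≠ b 0 ∧ η ≠ θ ∧ kreinSum D b c a θ η = 0 := by
  by_contra! hkrein
  have hcard := hG.card_le_of_kreinSum_ne_zero hθ hkrein
  have hchoose := Nat.div_mul_le_self ((eigMult G θ + 1) * eigMult G θ) 2
  rw [Nat.choose_two_right, Nat.add_sub_cancel] at hcard
  linarith

/-- If a distance-regular graph of diameter `3` with `n` vertices satisfies
`n ≥ (m₁+1)(m₁+2)/2`, then `q²₁₁ = 0` or `q³₁₁ = 0`, i.e. `Γ` is `Q`-polynomial with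
respect to `θ₁`. -/
theorem stmt13 {V : Type*} [Fintype V] [DecidableEq V] (G : SimpleGraph V)
    [DecidableRel G.Adj] (b c a : ℕ → ℕ) (hG : IsDRG G 3 b c a)
    (θ1 θ2 θ3 : ℝ) (h1 : IsEig G θ1) (h2 : IsEig G θ2) (h3 : IsEig G θ3)
    (h32 : θ3 < θ2) (h21 : θ2 < θ1) (h1k : θ1 < (b 0 : ℝ))
    (hall : ∀ θ : ℝ, IsEig G θ → θ = (b 0 : ℝ) ∨ θ = θ1 ∨ θ = θ2 ∨ θ = θ3)
    (n : ℕ) (hn : Fintype.card V = n) (m1 : ℕ) (hm1 : eigMult G θ1 = m1)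
    (hbound : (m1 + 1) * (m1 + 2) ≤ 2 * n) :
    IsQPolyTheta1 n m1 b c a θ1 θ2 θ3 := by
  subst hn hm1
  obtain ⟨η, hη, hηb, hηθ, hkrein⟩ := stmt13_general hG h1 hbound
  have hq : krein11 (Fintype.card V) (eigMult G θ1) b c a θ1 η = 0 := by
    rw [krein11_eq_mul_kreinSum _ _ b a (hG.c_one three_pos), hkrein, mul_zero]
  obtain rfl | rfl | rfl | rfl := hall η hη
  · exact absurd rfl hηb
  · exact absurd rfl hηθ
  · exact .inl hq
  · exact .inr hq
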